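/- arXiv:1705.01270 — 2 statements merged into one kernel-verified Lean document; each statement's English description precedes it below -/
import Mathlib

section
/- (Strong α-invariance of the spectral potential) For all φ, ψ ∈ L^∞(X, m), one has λ(φ + ψ ∘ α) = λ(φ + ψ). -/
open MeasureTheory Filter
open scoped ENNReal NNReal

noncomputable section

/-- The Birkhoff sum `S_n φ (x) = φ(x) + φ(α x) + ⋯ + φ(α^{n-1} x)`. -/
def birkhoff {X : Type*} (α : X → X) (φ : X → ℝ) (n : ℕ) (x : X) : ℝ :=
  ∑ i ∈ Finset.range n, φ (α^[i] x)

/-- Boundedness of the shift operator `A f = f ∘ α` on `L¹(X, m)`: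
there is `C > 0` with `m (α⁻¹ G) ≤ C · m G` for all measurable `G`. -/
def ShiftBounded {X : Type*} [MeasurableSpace X] (m : Measure X) (α : X → X) : Prop :=
  ∃ C : ℝ≥0, 0 < C ∧ ∀ G : Set X, MeasurableSet G → m (α ⁻¹' G) ≤ (C : ℝ≥0∞) * m G

/-- The operator norm `‖(e^ψ A^s)^k‖` of the `k`-th power of the weighted shift operator
`e^ψ A^s` (with base shift `α^[s]`) acting on `L¹(X, m)`, computed as the supremum of
`‖(e^ψ A^s)^k f‖₁` over `f` with `‖f‖₁ = 1`. -/
def weightedOpNorm {X : Type*} [MeasurableSpace X] (m : Measure X) (α : X → X) (s : ℕ)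
    (ψ : X → ℝ) (k : ℕ) : ℝ :=
  sSup {r : ℝ | ∃ f : X → ℝ, Integrable f m ∧ (∫ x, |f x| ∂m) = 1 ∧
    r = ∫ x, Real.exp (∑ j ∈ Finset.range k, ψ (α^[s * j] x)) * |f (α^[s * k] x)| ∂m}

/-- `λ(ψ, A^s)`: the logarithm of the spectral radius of `e^ψ A^s` on `L¹(X, m)`. -/
def spectralPotentialBase {X : Type*} [MeasurableSpace X] (m : Measure X) (α : X → X)
    (s : ℕ) (ψ : X → ℝ) : ℝ :=
  limUnder atTop fun k : ℕ => Real.log (weightedOpNorm m α s ψ k) / (k : ℝ)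

/-- The spectral potential `λ(φ) = lim (1/n) ln ‖A_φⁿ‖`. -/
def spectralPotential {X : Type*} [MeasurableSpace X] (m : Measure X) (α : X → X)
    (φ : X → ℝ) : ℝ :=
  spectralPotentialBase m α 1 φ

/-- A functional on `L^∞(X, m)` is positive if it is nonnegative on nonnegative functions. -/
def IsPositiveFunctional {X : Type*} [MeasurableSpace X] (m : Measure X)
    (μ : Lp ℝ ⊤ m → ℝ) : Prop :=
  ∀ φ : Lp ℝ ⊤ m, (0 : X → ℝ) ≤ᵐ[m] ⇑φ → 0 ≤ μ φ

/-- A functional on `L^∞(X, m)` is normalized if its value on the unit function is `1`. -/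
def IsNormalizedFunctional {X : Type*} [MeasurableSpace X] (m : Measure X)
    (μ : Lp ℝ ⊤ m → ℝ) : Prop :=
  ∀ φ : Lp ℝ ⊤ m, ⇑φ =ᵐ[m] (fun _ => (1 : ℝ)) → μ φ = 1

/-- A functional `μ` on `L^∞(X, m)` is `α`-invariant if `μ[f ∘ α] = μ[f]`. -/
def IsInvariantFunctional {X : Type*} [MeasurableSpace X] (m : Measure X) (α : X → X)
    (μ : Lp ℝ ⊤ m → ℝ) : Prop :=
  ∀ φ ψ : Lp ℝ ⊤ m, ⇑ψ =ᵐ[m] (fun x => φ (α x)) → μ ψ = μ φ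

/-- `μ ∈ M_α(X, m)`: positive, normalized and `α`-invariant. -/
def MemMalpha {X : Type*} [MeasurableSpace X] (m : Measure X) (α : X → X)
    (μ : Lp ℝ ⊤ m → ℝ) : Prop :=
  IsPositiveFunctional m μ ∧ IsNormalizedFunctional m μ ∧ IsInvariantFunctional m α μ

/-- A measurable partition of unity on `X` made of nonnegative elements of `L^∞(X, m)`
summing to `1`. -/
structure PartUnity {X : Type*} [MeasurableSpace X] (m : Measure X) where
  k : ℕ
  g : Fin k → Lp ℝ ⊤ m
  nonneg : ∀ i, (0 : X → ℝ) ≤ᵐ[m] ⇑(g i)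
  sum_one : ∀ᵐ x ∂m, (∑ i, (g i : Lp ℝ ⊤ m) x) = 1

/-- The summand `a · ln (r / a)` with the conventions: it is `0` if `a = 0`, and `-∞` if
`a ≠ 0` and `r = 0`. -/
def entTerm (a r : ℝ) : EReal :=
  if a = 0 then 0 else if r = 0 then ⊥ else ((a * Real.log (r / a) : ℝ) : EReal)

/-- `τₙ(μ, D)`. -/
def tauN {X : Type*} [MeasurableSpace X] (m : Measure X) (α : X → X)
    (μ : Lp ℝ ⊤ m → ℝ) (n : ℕ) (D : PartUnity m) : EReal :=
  sSup {r : EReal | ∃ f : X → ℝ, Integrable f m ∧ (∫ x, |f x| ∂m) = 1 ∧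
    r = ∑ i, entTerm (μ (D.g i)) (∫ x, (D.g i : Lp ℝ ⊤ m) x * |f (α^[n] x)| ∂m)}

/-- The t-entropy `τ(μ) = inf_{n, D} τₙ(μ, D) / n`. -/
def tEntropy {X : Type*} [MeasurableSpace X] (m : Measure X) (α : X → X)
    (μ : Lp ℝ ⊤ m → ℝ) : EReal :=
  ⨅ (n : ℕ) (_ : 0 < n) (D : PartUnity m), (((n : ℝ)⁻¹ : ℝ) : EReal) * tauN m α μ n D

/-- The t-entropy extended by `τ(μ) = -∞` outside `M_α(X, m)`. -/
def tEntropyExt {X : Type*} [MeasurableSpace X] (m : Measure X) (α : X → X)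
    (μ : Lp ℝ ⊤ m → ℝ) : EReal :=
  @ite _ (MemMalpha m α μ) (Classical.dec _) (tEntropy m α μ) ⊥

/-!
The functions `φ + ψ ∘ α` and `φ + ψ` differ by the coboundary `ψ ∘ α - ψ`, whose Birkhoff sums
telescope to `ψ ∘ αᵏ - ψ` and are therefore bounded by `2‖ψ‖_∞`, uniformly in `k`. So the two
weights of the `k`-th powers, and with them the operator norms, agree up to a factor
`exp (2‖ψ‖_∞)` independent of `k`, and dividing the logarithm of this factor by `k` makes it vanish
in the limit.
-/

lemma birkhoffSum_comp_sub_self {X G : Type*} [AddCommGroup G] (f : X → X) (g : X → G)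
    (n : ℕ) : birkhoffSum f (g ∘ f - g) n = g ∘ f^[n] - g := by
  funext x
  have shift : birkhoffSum f (g ∘ f) n x = birkhoffSum f g n (f x) := by
    simp only [birkhoffSum, Function.comp_apply, ← Function.iterate_succ_apply,
      Function.iterate_succ_apply']
  rw [birkhoffSum_sub, shift, birkhoffSum_apply_sub_birkhoffSum, Pi.sub_apply, Function.comp_apply]

lemma limUnder_congr_dist {ι E : Type*} [PseudoMetricSpace E] [Nonempty E] {p : Filter ι}
    {a b : ι → E} (h : Tendsto (fun i => dist (a i) (b i)) p (nhds 0)) :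
    limUnder p a = limUnder p b := by
  have same_limits : ∀ c, map a p ≤ nhds c ↔ map b p ≤ nhds c := fun _ => tendsto_iff_of_dist h
  simp only [limUnder, lim, same_limits]

lemma limUnder_div_natCast_congr {a b : ℕ → ℝ} {M : ℝ} (h : ∀ k, |a k - b k| ≤ M) :
    limUnder atTop (fun k : ℕ => a k / k) = limUnder atTop (fun k : ℕ => b k / k) := by
  refine limUnder_congr_dist <| squeeze_zero (fun _ => dist_nonneg) (fun k => ?_)
    (tendsto_const_div_atTop_nhds_zero_nat M)
  rw [Real.dist_eq, ← sub_div, abs_div, Nat.abs_cast]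
  gcongr
  exact h k

lemma abs_log_sub_log_le {a b M : ℝ} (ha : 0 ≤ a) (hM : 0 ≤ M)
    (hab : a ≤ Real.exp M * b) (hba : b ≤ Real.exp M * a) :
    |Real.log a - Real.log b| ≤ M := by
  have hb : 0 ≤ b := nonneg_of_mul_nonneg_right (ha.trans hab) (Real.exp_pos M)
  rcases ha.eq_or_lt with rfl | ha
  · obtain rfl : b = 0 := le_antisymm (by simpa using hba) hb
    simpa using hM
  have hb : 0 < b := pos_of_mul_pos_right (ha.trans_le hab) (Real.exp_pos M).le
  have log_le {c d : ℝ} (hc : 0 < c) (hd : 0 < d) (hcd : c ≤ Real.exp M * d) :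
      Real.log c ≤ M + Real.log d := by
    simpa [Real.log_mul, hd.ne'] using Real.log_le_log hc hcd
  exact abs_sub_le_iff.2 ⟨by linarith [log_le ha hb hab], by linarith [log_le hb ha hba]⟩

lemma sSup_image_le_mul_sSup_image {ι : Type*} {S : Set ι} {a b : ι → ℝ} {K : ℝ} (hK : 0 ≤ K)
    (hab : ∀ i ∈ S, a i ≤ K * b i) (hba : ∀ i ∈ S, b i ≤ K * a i) :
    sSup (a '' S) ≤ K * sSup (b '' S) := by
  rcases S.eq_empty_or_nonempty with rfl | hS
  · simp
  by_cases hb : BddAbove (b '' S)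
  · refine csSup_le (hS.image a) (Set.forall_mem_image.2 fun i hi => (hab i hi).trans ?_)
    gcongr
    exact le_csSup hb (Set.mem_image_of_mem b hi)
  · -- Both suprema are then the junk value `0` of an unbounded set.
    have ha : ¬ BddAbove (a '' S) := fun ⟨c, hc⟩ =>
      hb ⟨K * c, Set.forall_mem_image.2 fun i hi => (hba i hi).trans <| by
        gcongr
        exact hc (Set.mem_image_of_mem a hi)⟩
    simp [Real.sSup_of_not_bddAbove ha, Real.sSup_of_not_bddAbove hb]

lemma ae_norm_comp_sub_le {X E : Type*} [MeasurableSpace X] {m : Measure X}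
    [NormedAddCommGroup E] {T : X → X} {g : X → E} (hT : Measure.QuasiMeasurePreserving T m m)
    (hg : MemLp g ∞ m) : ∀ᵐ x ∂m, ‖g (T x) - g x‖ ≤ 2 * lpNorm g ∞ m := by
  have hbound := ae_le_lpNorm_exponent_top hg
  filter_upwards [hbound, hT.ae hbound] with x hx hTx
  linarith [norm_sub_le (g (T x)) (g x)]

section ExpWeight

variable {X : Type*} [MeasurableSpace X] {m : Measure X} {u v g : X → ℝ} {M : ℝ}

lemma integrable_exp_mul_of_sub_le (hmeas : AEStronglyMeasurable (u - v) m)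
    (hle : ∀ᵐ x ∂m, u x - v x ≤ M) (hv : Integrable (fun x => Real.exp (v x) * g x) m) :
    Integrable (fun x => Real.exp (u x) * g x) m := by
  have factor : (fun x => Real.exp (u x) * g x) =
      fun x => Real.exp ((u - v) x) * (Real.exp (v x) * g x) := by
    funext x
    rw [← mul_assoc, ← Real.exp_add, Pi.sub_apply, sub_add_cancel]
  rw [factor]
  refine hv.bdd_mul (c := Real.exp M) (Real.continuous_exp.comp_aestronglyMeasurable hmeas) ?_
  filter_upwards [hle] with x hx
  simpa using hx

lemma integral_exp_mul_le (hg : 0 ≤ g) (hmeas : AEStronglyMeasurable (u - v) m)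
    (habs : ∀ᵐ x ∂m, |u x - v x| ≤ M) :
    ∫ x, Real.exp (u x) * g x ∂m ≤ Real.exp M * ∫ x, Real.exp (v x) * g x ∂m := by
  by_cases hu : Integrable (fun x => Real.exp (u x) * g x) m
  · have hv : Integrable (fun x => Real.exp (v x) * g x) m :=
      integrable_exp_mul_of_sub_le (neg_sub u v ▸ hmeas.neg)
        (habs.mono fun _ hx => (abs_sub_le_iff.1 hx).2) hu
    rw [← integral_const_mul]
    refine integral_mono_ae hu (hv.const_mul _) ?_
    filter_upwards [habs] with x hx
    calc Real.exp (u x) * g x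
        ≤ Real.exp (M + v x) * g x := by
          gcongr
          · exact hg x
          · linarith [(abs_sub_le_iff.1 hx).1]
      _ = Real.exp M * (Real.exp (v x) * g x) := by rw [Real.exp_add, mul_assoc]
  · rw [integral_undef hu]
    exact mul_nonneg (Real.exp_pos M).le
      (integral_nonneg fun x => mul_nonneg (Real.exp_pos _).le (hg x))

end ExpWeight

section WeightedShift

variable {X : Type*} [MeasurableSpace X] {m : Measure X} {α : X → X} {s : ℕ} {u v : X → ℝ} {M : ℝ}

/-- The norm `‖(e^u A^s)^k f‖₁` whose supremum over `‖f‖₁ = 1` is `weightedOpNorm m α s u k`. The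
exponent is a Birkhoff sum of `α^[s]`, since `α^[s * j]` is the `j`-th iterate of that map. -/
def weightedShiftNorm (m : Measure X) (α : X → X) (s : ℕ) (u : X → ℝ) (k : ℕ) (f : X → ℝ) : ℝ :=
  ∫ x, Real.exp (birkhoffSum α^[s] u k x) * |f (α^[s * k] x)| ∂m

lemma weightedShiftNorm_nonneg (m : Measure X) (α : X → X) (s : ℕ) (u : X → ℝ) (k : ℕ)
    (f : X → ℝ) : 0 ≤ weightedShiftNorm m α s u k f :=
  integral_nonneg fun _ => mul_nonneg (Real.exp_pos _).le (abs_nonneg _)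

lemma weightedShiftNorm_le_exp_mul {k : ℕ}
    (hmeas : AEStronglyMeasurable (birkhoffSum α^[s] (u - v) k) m)
    (habs : ∀ᵐ x ∂m, |birkhoffSum α^[s] (u - v) k x| ≤ M) (f : X → ℝ) :
    weightedShiftNorm m α s u k f ≤ Real.exp M * weightedShiftNorm m α s v k f := by
  have sub_eq : birkhoffSum α^[s] (u - v) k = birkhoffSum α^[s] u k - birkhoffSum α^[s] v k :=
    funext (birkhoffSum_sub _ u v k)
  rw [sub_eq] at hmeas habs
  exact integral_exp_mul_le (fun _ => abs_nonneg _) hmeas habs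

lemma weightedOpNorm_eq_sSup_image (m : Measure X) (α : X → X) (s : ℕ) (u : X → ℝ) (k : ℕ) :
    weightedOpNorm m α s u k =
      sSup (weightedShiftNorm m α s u k '' {f | Integrable f m ∧ ∫ x, |f x| ∂m = 1}) := by
  simp only [weightedOpNorm, weightedShiftNorm, birkhoffSum, Function.iterate_mul, Set.image,
    Set.mem_ofPred_eq, and_assoc, eq_comm]

lemma weightedOpNorm_nonneg (m : Measure X) (α : X → X) (s : ℕ) (u : X → ℝ) (k : ℕ) :
    0 ≤ weightedOpNorm m α s u k := by
  rw [weightedOpNorm_eq_sSup_image]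
  exact Real.sSup_nonneg <| Set.forall_mem_image.2 fun f _ => weightedShiftNorm_nonneg m α s u k f

lemma abs_log_weightedOpNorm_sub_le {k : ℕ} (hM : 0 ≤ M)
    (hmeas : AEStronglyMeasurable (birkhoffSum α^[s] (u - v) k) m)
    (habs : ∀ᵐ x ∂m, |birkhoffSum α^[s] (u - v) k x| ≤ M) :
    |Real.log (weightedOpNorm m α s u k) - Real.log (weightedOpNorm m α s v k)| ≤ M := by
  have sub_swap : birkhoffSum α^[s] (v - u) k = -birkhoffSum α^[s] (u - v) k := by
    rw [← neg_sub u v]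
    exact funext (birkhoffSum_neg _ (u - v) k)
  have huv := weightedShiftNorm_le_exp_mul hmeas habs
  have hvu : ∀ f, weightedShiftNorm m α s v k f ≤ Real.exp M * weightedShiftNorm m α s u k f :=
    weightedShiftNorm_le_exp_mul (sub_swap ▸ hmeas.neg) (by simpa [sub_swap] using habs)
  refine abs_log_sub_log_le (weightedOpNorm_nonneg m α s u k) hM ?_ ?_ <;>
    simp only [weightedOpNorm_eq_sSup_image]
  · exact sSup_image_le_mul_sSup_image (Real.exp_pos M).le (fun f _ => huv f) fun f _ => hvu f
  · exact sSup_image_le_mul_sSup_image (Real.exp_pos M).le (fun f _ => hvu f) fun f _ => huv f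

lemma spectralPotentialBase_eq_of_abs_birkhoffSum_sub_le (hM : 0 ≤ M)
    (hmeas : ∀ k, AEStronglyMeasurable (birkhoffSum α^[s] (u - v) k) m)
    (habs : ∀ k, ∀ᵐ x ∂m, |birkhoffSum α^[s] (u - v) k x| ≤ M) :
    spectralPotentialBase m α s u = spectralPotentialBase m α s v :=
  limUnder_div_natCast_congr fun k => abs_log_weightedOpNorm_sub_le hM (hmeas k) (habs k)

end WeightedShift

lemma ShiftBounded.quasiMeasurePreserving {X : Type*} [MeasurableSpace X] {m : Measure X}
    {α : X → X} (hbdd : ShiftBounded m α) (hα : Measurable α) :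
    Measure.QuasiMeasurePreserving α m m := by
  obtain ⟨C, -, hC⟩ := hbdd
  refine ⟨hα, Measure.AbsolutelyContinuous.mk fun G hG hmG => ?_⟩
  simpa [Measure.map_apply hα hG, hmG] using hC G hG

theorem spectralPotential_strong_invariance_general
    {X : Type*} [MeasurableSpace X] {m : Measure X} {α : X → X}
    (hα : Measure.QuasiMeasurePreserving α m m) (s : ℕ) (φ : X →ₘ[m] ℝ) (ψ : Lp ℝ ∞ m) :
    spectralPotentialBase m α s (fun x => φ x + ψ (α^[s] x)) =
      spectralPotentialBase m α s (fun x => φ x + ψ x) := by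
  have telescope (k : ℕ) :
      birkhoffSum α^[s] (⇑φ + ⇑ψ ∘ α^[s] - (⇑φ + ⇑ψ)) k = ⇑ψ ∘ (α^[s])^[k] - ⇑ψ := by
    rw [add_sub_add_left_eq_sub, birkhoffSum_comp_sub_self]
  have hiter (k : ℕ) : Measure.QuasiMeasurePreserving (α^[s])^[k] m m := (hα.iterate s).iterate k
  have hψ : MemLp ψ ∞ m := Lp.memLp ψ
  refine spectralPotentialBase_eq_of_abs_birkhoffSum_sub_le
    (u := ⇑φ + ⇑ψ ∘ α^[s]) (v := ⇑φ + ⇑ψ) (M := 2 * lpNorm ψ ∞ m)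
    (mul_nonneg zero_le_two lpNorm_nonneg) (fun k => ?_) (fun k => ?_)
  · rw [telescope]
    exact (hψ.aestronglyMeasurable.comp_quasiMeasurePreserving (hiter k)).sub
      hψ.aestronglyMeasurable
  · rw [telescope]
    exact ae_norm_comp_sub_le (hiter k) hψ

/-- **Lemma 6 e)** (strong `α`-invariance): `λ(φ + ψ ∘ α) = λ(φ + ψ)`. -/
theorem spectralPotential_strong_invariance
    {X : Type*} [MeasurableSpace X] (m : Measure X) (α : X → X)
    (hα : Measurable α) (hbdd : ShiftBounded m α)
    (φ ψ : Lp ℝ ⊤ m) :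
    spectralPotential m α (fun x => φ x + ψ (α x)) =
      spectralPotential m α (fun x => φ x + ψ x) :=
  spectralPotential_strong_invariance_general (hbdd.quasiMeasurePreserving hα) 1 φ ψ

end
end

section
/- The t-entropy, extended by τ(μ) := −∞ for functionals μ not in M_α(X, m), is a concave and weak-* upper semicontinuous function on the continuous dual space of L^∞(X, m). -/
open MeasureTheory Filter
open scoped ENNReal NNReal

noncomputable section

/-!
For `p, r ≥ 0` the summand `p log (r / p)` is the infimum over `t ∈ ℝ` of `eᵗ r - (1 + t) p`, with
all conventions about zeros included. Being an infimum of continuous linear functions, it is jointly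
concave and upper semicontinuous in `(p, r)`. For fixed `n` and `D`, the vectors
`(∫ g |f ∘ αⁿ| dm)_{g ∈ D}` with `‖f‖ = 1` form a convex set, bounded because the shift is.
Maximizing over them preserves concavity because the set is convex; it preserves upper
semicontinuity because the closure of the set is compact, and passing to the closure does not change
the supremum, the sum being continuous in `r` for fixed `p`. Infima over `n` and `D` preserve both
properties, and so does the extension by `-∞` off the convex weak-* closed set `M_α(X, m)`.
-/

open Set Topology

section EConcaveOn

/-- Concavity on `s` of a function with values in `[-∞, ∞]`, with the convention `∞ - ∞ = -∞` of
`EReal`. Mathlib's `ConcaveOn` does not apply, as `EReal` carries no scalar action of `ℝ`. -/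
def EConcaveOn {E : Type*} [AddCommMonoid E] [Module ℝ E] (s : Set E) (f : E → EReal) : Prop :=
  Convex ℝ s ∧ ∀ ⦃x⦄, x ∈ s → ∀ ⦃y⦄, y ∈ s → ∀ ⦃a b : ℝ⦄, 0 ≤ a → 0 ≤ b → a + b = 1 →
    (a : EReal) * f x + (b : EReal) * f y ≤ f (a • x + b • y)

variable {E F : Type*} [AddCommMonoid E] [Module ℝ E] [AddCommMonoid F] [Module ℝ F]
  {s t : Set E} {f g : E → EReal}

theorem eConcaveOn_iff_forall_pos : EConcaveOn s f ↔
    Convex ℝ s ∧ ∀ ⦃x⦄, x ∈ s → ∀ ⦃y⦄, y ∈ s → ∀ ⦃a b : ℝ⦄, 0 < a → 0 < b → a + b = 1 →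
      (a : EReal) * f x + (b : EReal) * f y ≤ f (a • x + b • y) := by
  refine ⟨fun h => ⟨h.1, fun x hx y hy a b ha hb => h.2 hx hy ha.le hb.le⟩,
    fun h => ⟨h.1, fun x hx y hy a b ha hb hab => ?_⟩⟩
  rcases ha.eq_or_lt with rfl | ha
  · obtain rfl : b = 1 := by linarith
    simp
  rcases hb.eq_or_lt with rfl | hb
  · obtain rfl : a = 1 := by linarith
    simp
  exact h.2 hx hy ha hb hab

theorem eConcaveOn_coe_of_concaveOn {φ : E → ℝ} (hφ : ConcaveOn ℝ s φ) :
    EConcaveOn s fun x => (φ x : EReal) := by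
  refine ⟨hφ.1, fun x hx y hy a b ha hb hab => ?_⟩
  rw [← EReal.coe_mul, ← EReal.coe_mul, ← EReal.coe_add]
  exact EReal.coe_le_coe (hφ.2 hx hy ha hb hab)

namespace EConcaveOn

theorem subset (hf : EConcaveOn t f) (hst : s ⊆ t) (hs : Convex ℝ s) : EConcaveOn s f :=
  ⟨hs, fun _ hx _ hy _ _ ha hb hab => hf.2 (hst hx) (hst hy) ha hb hab⟩

theorem congr (hf : EConcaveOn s f) (hfg : EqOn f g s) : EConcaveOn s g := by
  refine ⟨hf.1, fun x hx y hy a b ha hb hab => ?_⟩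
  rw [← hfg hx, ← hfg hy, ← hfg (hf.1 hx hy ha hb hab)]
  exact hf.2 hx hy ha hb hab

theorem comp_linearMap {f : F → EReal} {s : Set F} (hf : EConcaveOn s f) (L : E →ₗ[ℝ] F) :
    EConcaveOn (L ⁻¹' s) fun x => f (L x) := by
  refine ⟨hf.1.linear_preimage L, fun x hx y hy a b ha hb hab => ?_⟩
  simpa only [map_add, map_smul] using hf.2 hx hy ha hb hab

theorem add (hf : EConcaveOn s f) (hg : EConcaveOn s g) : EConcaveOn s (f + g) := by
  refine ⟨hf.1, fun x hx y hy a b ha hb hab => ?_⟩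
  have coe_mul_add {c : ℝ} (hc : 0 ≤ c) (u v : EReal) : (c : EReal) * (u + v) = c * u + c * v :=
    EReal.left_distrib_of_nonneg_of_ne_top (EReal.coe_nonneg.2 hc) (EReal.coe_ne_top c) u v
  simp only [Pi.add_apply]
  rw [coe_mul_add ha, coe_mul_add hb, add_add_add_comm]
  exact add_le_add (hf.2 hx hy ha hb hab) (hg.2 hx hy ha hb hab)

theorem sum {ι : Type*} {u : Finset ι} {f : ι → E → EReal} (hs : Convex ℝ s)
    (hf : ∀ i ∈ u, EConcaveOn s (f i)) : EConcaveOn s (∑ i ∈ u, f i) :=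
  Finset.sum_induction f (EConcaveOn s) (fun _ _ => add) ⟨hs, by simp⟩ hf

theorem coe_mul (hf : EConcaveOn s f) {c : ℝ} (hc : 0 ≤ c) :
    EConcaveOn s fun x => (c : EReal) * f x := by
  have hc' : (0 : EReal) ≤ c := EReal.coe_nonneg.2 hc
  refine ⟨hf.1, fun x hx y hy a b ha hb hab => ?_⟩
  rw [mul_left_comm (a : EReal), mul_left_comm (b : EReal),
    ← EReal.left_distrib_of_nonneg_of_ne_top hc' (EReal.coe_ne_top c)]
  exact mul_le_mul_of_nonneg_left (hf.2 hx hy ha hb hab) hc'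

theorem iInf {ι : Sort*} {f : ι → E → EReal} (hs : Convex ℝ s) (hf : ∀ i, EConcaveOn s (f i)) :
    EConcaveOn s fun x => ⨅ i, f i x := by
  refine ⟨hs, fun x hx y hy a b ha hb hab => le_iInf fun i => ?_⟩
  have ha' : (0 : EReal) ≤ a := EReal.coe_nonneg.2 ha
  have hb' : (0 : EReal) ≤ b := EReal.coe_nonneg.2 hb
  calc (a : EReal) * (⨅ i, f i x) + (b : EReal) * ⨅ i, f i y
      ≤ a * f i x + b * f i y :=
        add_le_add (mul_le_mul_of_nonneg_left (iInf_le _ i) ha')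
          (mul_le_mul_of_nonneg_left (iInf_le _ i) hb')
    _ ≤ f i (a • x + b • y) := (hf i).2 hx hy ha hb hab

end EConcaveOn

theorem exists_lt_coe_mul_of_lt_coe_mul_biSup {ι : Type*} {u : Set ι} {φ : ι → EReal} {a : ℝ}
    (ha : 0 < a) {x : EReal} (hx : x < (a : EReal) * ⨆ i ∈ u, φ i) :
    ∃ i ∈ u, x < (a : EReal) * φ i := by
  have ha' : (0 : EReal) < a := EReal.coe_pos.2 ha
  simp only [mul_comm (a : EReal), ← EReal.div_lt_iff ha' (EReal.coe_ne_top a), lt_iSup_iff,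
    exists_prop] at hx ⊢
  exact hx

theorem EConcaveOn.biSup_right {f : E × F → EReal} {t : Set F} (hs : Convex ℝ s)
    (ht : Convex ℝ t) (hf : EConcaveOn (s ×ˢ t) f) : EConcaveOn s fun x => ⨆ y ∈ t, f (x, y) := by
  refine eConcaveOn_iff_forall_pos.2 ⟨hs, fun x hx x' hx' a b ha hb hab =>
    EReal.add_le_of_forall_lt fun c hc c' hc' => ?_⟩
  obtain ⟨y, hy, hcy⟩ := exists_lt_coe_mul_of_lt_coe_mul_biSup ha hc
  obtain ⟨y', hy', hcy'⟩ := exists_lt_coe_mul_of_lt_coe_mul_biSup hb hc'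
  calc c + c' ≤ a * f (x, y) + b * f (x', y') := add_le_add hcy.le hcy'.le
    _ ≤ f (a • x + b • x', a • y + b • y') :=
      hf.2 (mk_mem_prod hx hy) (mk_mem_prod hx' hy') ha.le hb.le hab
    _ ≤ ⨆ z ∈ t, f (a • x + b • x', z) :=
      le_iSup₂ (f := fun z _ => f (a • x + b • x', z)) _ (ht hy hy' ha.le hb.le hab)

theorem EConcaveOn.univ_of_eq_bot (hf : EConcaveOn s f) (hbot : ∀ x ∉ s, f x = ⊥) :
    EConcaveOn univ f := by
  refine eConcaveOn_iff_forall_pos.2 ⟨convex_univ, fun x _ y _ a b ha hb hab => ?_⟩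
  by_cases hx : x ∈ s
  · by_cases hy : y ∈ s
    · exact hf.2 hx hy ha.le hb.le hab
    · simp [hbot y hy, EReal.coe_mul_bot_of_pos hb]
  · simp [hbot x hx, EReal.coe_mul_bot_of_pos ha]

end EConcaveOn

section Semicontinuity

theorem upperSemicontinuousOn_congr_eqOn {X γ : Type*} [TopologicalSpace X] [Preorder γ]
    {s : Set X} {f g : X → γ} (hf : UpperSemicontinuousOn f s) (hfg : EqOn f g s) :
    UpperSemicontinuousOn g s :=
  fun x hx => (hf x hx).congr_of_eventuallyEq hx <|
    eventually_nhdsWithin_of_forall fun _ hy _ => by rw [hfg hy]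

theorem upperSemicontinuous_of_eq_bot_compl {X γ : Type*} [TopologicalSpace X] [Preorder γ]
    [OrderBot γ] {s : Set X} {f : X → γ} (hs : IsClosed s) (hf : UpperSemicontinuousOn f s)
    (hbot : ∀ x ∉ s, f x = ⊥) : UpperSemicontinuous f := by
  intro x c hc
  by_cases hx : x ∈ s
  · filter_upwards [eventually_nhdsWithin_iff.1 (hf x hx c hc)] with y hy
    by_cases hys : y ∈ s
    · exact hy hys
    · exact hbot y hys ▸ bot_lt_of_lt hc
  · filter_upwards [hs.isOpen_compl.mem_nhds hx] with y hy
    exact hbot y hy ▸ bot_lt_of_lt hc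

theorem upperSemicontinuousOn_biSup_of_isCompact {X Y γ : Type*} [TopologicalSpace X]
    [TopologicalSpace Y] [CompleteLinearOrder γ] [DenselyOrdered γ] {s : Set X} {K : Set Y}
    {f : X × Y → γ} (hK : IsCompact K) (hf : UpperSemicontinuousOn f (s ×ˢ K)) :
    UpperSemicontinuousOn (fun x => ⨆ y ∈ K, f (x, y)) s := by
  intro x hx c hc
  obtain ⟨d, hd, hdc⟩ := exists_between hc
  have hlt : ∀ y ∈ K, ∀ᶠ z : X × Y in 𝓝 (x, y), z ∈ s ×ˢ K → f z < d := fun y hy =>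
    eventually_nhdsWithin_iff.1 <|
      hf (x, y) ⟨hx, hy⟩ d ((le_iSup₂ (f := fun y _ => f (x, y)) y hy).trans_lt hd)
  have huniform := hK.eventually_forall_of_forall_eventually
    (P := fun x' y => (x', y) ∈ s ×ˢ K → f (x', y) < d) hlt
  refine eventually_nhdsWithin_iff.2 (huniform.mono fun x' hx' hx's => ?_)
  exact (iSup₂_le fun y hy => (hx' y hy ⟨hx's, hy⟩).le).trans_lt hdc

theorem biSup_closure_eq {Y γ : Type*} [TopologicalSpace Y] [CompleteLinearOrder γ]
    [TopologicalSpace γ] [OrderClosedTopology γ] {f : Y → γ} (hf : Continuous f) (s : Set Y) :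
    ⨆ y ∈ closure s, f y = ⨆ y ∈ s, f y := by
  refine le_antisymm (iSup₂_le fun y hy => ?_) (biSup_mono fun _ hy => subset_closure hy)
  have hclosed : IsClosed {y | f y ≤ ⨆ y ∈ s, f y} := isClosed_le hf continuous_const
  exact closure_minimal (fun y hy => le_iSup₂ (f := fun y _ => f y) y hy) hclosed hy

variable {X ι : Type*} [TopologicalSpace X] {f : ι → X → EReal} {u : Finset ι}

theorem continuous_sum_of_ne_top (hf : ∀ i ∈ u, Continuous (f i))
    (htop : ∀ i ∈ u, ∀ x, f i x ≠ ⊤) : Continuous (∑ i ∈ u, f i) := by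
  refine (Finset.sum_induction f (fun g => Continuous g ∧ ∀ x, g x ≠ ⊤) ?_
    ⟨continuous_const, fun _ => EReal.zero_ne_top⟩ fun i hi => ⟨hf i hi, htop i hi⟩).1
  rintro g h ⟨hg, hg_top⟩ ⟨hh, hh_top⟩
  refine ⟨continuous_iff_continuousAt.2 fun x => ?_,
    fun x => EReal.add_ne_top (hg_top x) (hh_top x)⟩
  exact ContinuousAt.comp (g := fun z : EReal × EReal => z.1 + z.2) (f := fun x => (g x, h x))
    (EReal.continuousAt_add (.inl (hg_top x)) (.inr (hh_top x))) (hg.prodMk hh).continuousAt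

theorem upperSemicontinuousOn_sum_of_ne_top {s : Set X}
    (hf : ∀ i ∈ u, UpperSemicontinuousOn (f i) s) (htop : ∀ i ∈ u, ∀ x ∈ s, f i x ≠ ⊤) :
    UpperSemicontinuousOn (∑ i ∈ u, f i) s := by
  refine (Finset.sum_induction f (fun g => UpperSemicontinuousOn g s ∧ ∀ x ∈ s, g x ≠ ⊤) ?_
    ⟨upperSemicontinuousOn_const, fun _ _ => EReal.zero_ne_top⟩
    fun i hi => ⟨hf i hi, htop i hi⟩).1
  rintro g h ⟨hg, hg_top⟩ ⟨hh, hh_top⟩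
  exact ⟨hg.add' hh fun x hx => EReal.continuousAt_add (.inl (hg_top x hx)) (.inr (hh_top x hx)),
    fun x hx => EReal.add_ne_top (hg_top x hx) (hh_top x hx)⟩

theorem continuous_coe_mul_of_pos {c : ℝ} (hc : 0 < c) :
    Continuous fun x : EReal => (c : EReal) * x := by
  have hc' : (c : EReal) ≠ 0 := EReal.coe_ne_zero.2 hc.ne'
  refine continuous_iff_continuousAt.2 fun x => ?_
  exact (EReal.continuousAt_mul (p := ((c : EReal), x)) (.inl hc') (.inl hc')
    (.inl (EReal.coe_ne_bot c)) (.inl (EReal.coe_ne_top c))).comp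
    (continuous_const.prodMk continuous_id).continuousAt

theorem upperSemicontinuousOn_coe_mul {f : X → EReal} {s : Set X}
    (hf : UpperSemicontinuousOn f s) {c : ℝ} (hc : 0 < c) :
    UpperSemicontinuousOn (fun x => (c : EReal) * f x) s :=
  (continuous_coe_mul_of_pos hc).comp_upperSemicontinuousOn hf fun _ _ h =>
    mul_le_mul_of_nonneg_left h (EReal.coe_nonneg.2 hc.le)

end Semicontinuity

section EntTerm

variable {p r : ℝ}

theorem entTerm_ne_top (p r : ℝ) : entTerm p r ≠ ⊤ := by
  unfold entTerm
  split_ifs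
  · exact EReal.zero_ne_top
  · exact bot_ne_top
  · exact EReal.coe_ne_top _

theorem entTerm_zero_left (r : ℝ) : entTerm 0 r = 0 := if_pos rfl

theorem entTerm_zero_right (hp : p ≠ 0) : entTerm p 0 = ⊥ := by
  rw [entTerm, if_neg hp, if_pos rfl]

theorem entTerm_of_ne_zero (hp : p ≠ 0) (hr : r ≠ 0) :
    entTerm p r = ((p * Real.log (r / p) : ℝ) : EReal) := by
  rw [entTerm, if_neg hp, if_neg hr]

theorem entTerm_eq_coe_mul_log (hp : 0 ≤ p) (r : ℝ) :
    entTerm p r = (p : EReal) * ENNReal.log (ENNReal.ofReal |r / p|) := by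
  rcases hp.eq_or_lt with rfl | hp
  · simp [entTerm_zero_left]
  rcases eq_or_ne r 0 with rfl | hr
  · simp [entTerm_zero_right hp.ne', EReal.coe_mul_bot_of_pos hp]
  · rw [entTerm_of_ne_zero hp.ne' hr,
      ENNReal.log_ofReal_of_pos (abs_pos.2 (div_ne_zero hr hp.ne')), Real.log_abs, EReal.coe_mul]

theorem continuous_entTerm_right (hp : 0 ≤ p) : Continuous (entTerm p) := by
  rcases hp.eq_or_lt with rfl | hp
  · simpa only [funext entTerm_zero_left] using continuous_const
  · rw [funext (entTerm_eq_coe_mul_log hp.le)]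
    exact (continuous_coe_mul_of_pos hp).comp <| ENNReal.continuous_log.comp <|
      ENNReal.continuous_ofReal.comp (continuous_id.div_const p).abs

theorem mul_log_div_le_exp_mul_sub (hp : 0 < p) (hr : 0 < r) (t : ℝ) :
    p * Real.log (r / p) ≤ Real.exp t * r - (1 + t) * p := by
  have hlog : Real.log (Real.exp t * (r / p)) = t + Real.log (r / p) := by
    rw [Real.log_mul (Real.exp_ne_zero t) (by positivity), Real.log_exp]
  have htangent : t + Real.log (r / p) ≤ Real.exp t * (r / p) - 1 :=
    hlog ▸ Real.log_le_sub_one_of_pos (by positivity)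
  calc p * Real.log (r / p) ≤ p * (Real.exp t * (r / p) - 1 - t) := by gcongr; linarith
    _ = Real.exp t * r - (1 + t) * p := by field_simp; ring

theorem entTerm_eq_iInf (hp : 0 ≤ p) (hr : 0 ≤ r) :
    entTerm p r = ⨅ t : ℝ, ((Real.exp t * r - (1 + t) * p : ℝ) : EReal) := by
  rcases hp.eq_or_lt with rfl | hp
  · rw [entTerm_zero_left]
    have hlim : Tendsto (fun t => Real.exp t * r - (1 + t) * 0) atBot (𝓝 0) := by
      simpa using Real.tendsto_exp_atBot.mul_const r
    refine le_antisymm (le_iInf fun t => ?_)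
      (ge_of_tendsto' (EReal.tendsto_coe.2 hlim) fun t => iInf_le _ t)
    exact EReal.coe_nonneg.2 (by rw [mul_zero, sub_zero]; positivity)
  rcases hr.eq_or_lt with rfl | hr
  · rw [entTerm_zero_right hp.ne', eq_comm, ← le_bot_iff]
    have hlim : Tendsto (fun t => Real.exp t * 0 - (1 + t) * p) atTop atBot := by
      simpa using (tendsto_atTop_add_const_left _ 1 tendsto_id).atTop_mul_const hp
    exact ge_of_tendsto' (EReal.tendsto_coe_nhds_bot_iff.2 hlim) fun t => iInf_le _ t
  · rw [entTerm_of_ne_zero hp.ne' hr.ne']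
    refine le_antisymm (le_iInf fun t => EReal.coe_le_coe (mul_log_div_le_exp_mul_sub hp hr t))
      ((iInf_le _ (Real.log (p / r))).trans (EReal.coe_le_coe (le_of_eq ?_)))
    rw [Real.exp_log (by positivity), div_mul_cancel₀ p hr.ne', ← inv_div p r, Real.log_inv]
    ring

theorem eConcaveOn_entTerm : EConcaveOn (Ici (0 : ℝ × ℝ)) fun z => entTerm z.1 z.2 := by
  refine EConcaveOn.congr (EConcaveOn.iInf (convex_Ici 0) fun t => ?_) fun z hz =>
    (entTerm_eq_iInf hz.1 hz.2).symm
  exact eConcaveOn_coe_of_concaveOn <|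
    (Real.exp t • LinearMap.snd ℝ ℝ ℝ - (1 + t) • LinearMap.fst ℝ ℝ ℝ).concaveOn (convex_Ici 0)

theorem upperSemicontinuousOn_entTerm :
    UpperSemicontinuousOn (fun z : ℝ × ℝ => entTerm z.1 z.2) (Ici 0) := by
  refine upperSemicontinuousOn_congr_eqOn (upperSemicontinuousOn_iInf fun t => ?_) fun z hz =>
    (entTerm_eq_iInf hz.1 hz.2).symm
  exact (continuous_coe_real_ereal.comp (by fun_prop)).upperSemicontinuous.upperSemicontinuousOn _

end EntTerm

section EntSup

variable {ι : Type*} [Fintype ι]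

/-- The supremum of `∑ i, p i * log (r i / p i)` over the vectors `r` in `R`, with the conventions
of `entTerm`. It expresses `τₙ(μ, D)` in terms of the values `p` of `μ` on `D`. -/
def entSup (R : Set (ι → ℝ)) (p : ι → ℝ) : EReal :=
  ⨆ r ∈ R, ∑ i, entTerm (p i) (r i)

theorem eConcaveOn_sum_entTerm :
    EConcaveOn (Ici (0 : (ι → ℝ) × (ι → ℝ))) fun z => ∑ i, entTerm (z.1 i) (z.2 i) := by
  rw [← Finset.sum_fn]
  refine EConcaveOn.sum (convex_Ici 0) fun i _ => ?_
  let proj : (ι → ℝ) →ₗ[ℝ] ℝ := LinearMap.proj i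
  exact (eConcaveOn_entTerm.comp_linearMap (proj.prodMap proj)).subset
    (fun z hz => ⟨hz.1 i, hz.2 i⟩) (convex_Ici 0)

theorem upperSemicontinuousOn_sum_entTerm :
    UpperSemicontinuousOn (fun z : (ι → ℝ) × (ι → ℝ) => ∑ i, entTerm (z.1 i) (z.2 i)) (Ici 0) := by
  rw [← Finset.sum_fn]
  refine upperSemicontinuousOn_sum_of_ne_top (fun i _ => ?_) fun i _ z _ => entTerm_ne_top _ _
  exact upperSemicontinuousOn_entTerm.comp
    (g := fun z : (ι → ℝ) × (ι → ℝ) => (z.1 i, z.2 i)) (by fun_prop) fun z hz => ⟨hz.1 i, hz.2 i⟩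

theorem continuous_sum_entTerm_right {p : ι → ℝ} (hp : 0 ≤ p) :
    Continuous fun r : ι → ℝ => ∑ i, entTerm (p i) (r i) := by
  rw [← Finset.sum_fn]
  exact continuous_sum_of_ne_top
    (fun i _ => (continuous_entTerm_right (hp i)).comp (continuous_apply i))
    fun i _ r => entTerm_ne_top _ _

variable {R : Set (ι → ℝ)}

theorem eConcaveOn_entSup (hR : Convex ℝ R) (hR0 : R ⊆ Ici 0) :
    EConcaveOn (Ici 0) (entSup R) := by
  have hjoint := eConcaveOn_sum_entTerm.subset (s := Ici 0 ×ˢ R)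
    (fun _ hz => ⟨hz.1, hR0 hz.2⟩) ((convex_Ici 0).prod hR)
  exact (hjoint.biSup_right (convex_Ici 0) hR :)

theorem upperSemicontinuousOn_entSup (hR : Bornology.IsBounded R) (hR0 : R ⊆ Ici 0) :
    UpperSemicontinuousOn (entSup R) (Ici 0) := by
  have hclosure : closure R ⊆ Ici 0 := closure_minimal hR0 isClosed_Ici
  have husc := upperSemicontinuousOn_biSup_of_isCompact (s := Ici 0) hR.isCompact_closure <|
    upperSemicontinuousOn_sum_entTerm.mono fun _ hz => ⟨hz.1, hclosure hz.2⟩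
  exact upperSemicontinuousOn_congr_eqOn husc fun p hp =>
    biSup_closure_eq (continuous_sum_entTerm_right hp) R

end EntSup

section ShiftBounded

variable {X : Type*} [MeasurableSpace X] {m : Measure X} {S T : X → X}

namespace ShiftBounded

theorem comp (hS : ShiftBounded m S) (hT : ShiftBounded m T) (hTm : Measurable T) :
    ShiftBounded m (T ∘ S) := by
  obtain ⟨C, hC0, hC⟩ := hS
  obtain ⟨D, hD0, hD⟩ := hT
  refine ⟨C * D, mul_pos hC0 hD0, fun G hG => ?_⟩
  calc m (T ∘ S ⁻¹' G) ≤ C * m (T ⁻¹' G) := hC _ (hTm hG)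
    _ ≤ C * (D * m G) := by gcongr; exact hD G hG
    _ = (C * D : ℝ≥0) * m G := by rw [ENNReal.coe_mul, mul_assoc]

theorem iterate (hT : ShiftBounded m T) (hTm : Measurable T) (n : ℕ) : ShiftBounded m T^[n] := by
  induction n with
  | zero => exact ⟨1, one_pos, fun G _ => by simp⟩
  | succ n ih => exact Function.iterate_succ' T n ▸ ih.comp hT hTm

theorem exists_map_le_smul (hT : ShiftBounded m T) (hTm : Measurable T) :
    ∃ C : ℝ≥0, m.map T ≤ C • m := by
  obtain ⟨C, -, hC⟩ := hT
  refine ⟨C, Measure.le_iff.2 fun G hG => ?_⟩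
  rw [Measure.map_apply hTm hG]
  exact hC G hG

variable {E : Type*} [NormedAddCommGroup E]

theorem integrable_comp (hT : ShiftBounded m T) (hTm : Measurable T) {f : X → E}
    (hf : Integrable f m) : Integrable (fun x => f (T x)) m := by
  obtain ⟨C, hC⟩ := hT.exists_map_le_smul hTm
  exact (hf.smul_measure_nnreal.mono_measure hC).comp_measurable hTm

theorem exists_integral_norm_comp_le (hT : ShiftBounded m T) (hTm : Measurable T) :
    ∃ C : ℝ≥0, ∀ f : X → E, Integrable f m → ∫ x, ‖f (T x)‖ ∂m ≤ C * ∫ x, ‖f x‖ ∂m := by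
  obtain ⟨C, hC⟩ := hT.exists_map_le_smul hTm
  refine ⟨C, fun f hf => ?_⟩
  have hint : Integrable (fun x => ‖f x‖) (C • m) := hf.norm.smul_measure_nnreal
  calc ∫ x, ‖f (T x)‖ ∂m = ∫ x, ‖f x‖ ∂m.map T :=
        (integral_map hTm.aemeasurable (hint.mono_measure hC).aestronglyMeasurable).symm
    _ ≤ ∫ x, ‖f x‖ ∂(C • m) :=
        integral_mono_measure hC (ae_of_all _ fun _ => norm_nonneg _) hint
    _ = C * ∫ x, ‖f x‖ ∂m := integral_smul_nnreal_measure _ C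

end ShiftBounded

theorem ae_norm_coeFn_le_norm {E : Type*} [NormedAddCommGroup E] (g : Lp E ⊤ m) :
    ∀ᵐ x ∂m, ‖g x‖ ≤ ‖g‖ := by
  filter_upwards [ae_le_eLpNormEssSup (f := g) (μ := m)] with x hx
  rw [← eLpNorm_exponent_top] at hx
  simpa [Lp.norm_def] using ENNReal.toReal_mono (Lp.eLpNorm_ne_top g) hx

end ShiftBounded

section ShiftMoments

variable {X ι : Type*} [MeasurableSpace X] {m : Measure X} {T : X → X} {g : ι → Lp ℝ ⊤ m}

/-- The vectors `(∫ gᵢ |f ∘ T| dm)ᵢ`, where `f` runs through the unit sphere of `L¹(X, m)`. With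
`T = αⁿ` and `g` a partition of unity `D`, they are the vectors over which `τₙ(μ, D)` maximizes. -/
def shiftMoments (m : Measure X) (T : X → X) (g : ι → Lp ℝ ⊤ m) : Set (ι → ℝ) :=
  (fun (f : X → ℝ) i => ∫ x, g i x * |f (T x)| ∂m) '' {f | Integrable f m ∧ ∫ x, |f x| ∂m = 1}

theorem shiftMoments_subset_Ici (hg : ∀ i, 0 ≤ᵐ[m] g i) : shiftMoments m T g ⊆ Ici 0 := by
  rintro _ ⟨f, -, rfl⟩ i
  exact integral_nonneg_of_ae ((hg i).mono fun x hx => mul_nonneg hx (abs_nonneg _))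

theorem isBounded_shiftMoments (hTm : Measurable T) (hT : ShiftBounded m T) :
    Bornology.IsBounded (shiftMoments m T g) := by
  obtain ⟨C, hC⟩ := hT.exists_integral_norm_comp_le (E := ℝ) hTm
  refine Bornology.forall_isBounded_image_eval_iff.1 fun i =>
    isBounded_iff_forall_norm_le.2 ⟨‖g i‖ * C, ?_⟩
  rintro _ ⟨_, ⟨f, ⟨hf, hf1⟩, rfl⟩, rfl⟩
  calc ‖∫ x, g i x * |f (T x)| ∂m‖
      ≤ ∫ x, ‖g i‖ * |f (T x)| ∂m := by
        refine norm_integral_le_of_norm_le ((hT.integrable_comp hTm hf).abs.const_mul _) ?_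
        filter_upwards [ae_norm_coeFn_le_norm (g i)] with x hx
        rw [norm_mul, Real.norm_eq_abs |f (T x)|, abs_abs]
        gcongr
    _ = ‖g i‖ * ∫ x, |f (T x)| ∂m := integral_const_mul _ _
    _ ≤ ‖g i‖ * (C * ∫ x, |f x| ∂m) := by gcongr; exact hC f hf
    _ = ‖g i‖ * C := by rw [hf1, mul_one]

theorem convex_shiftMoments (hTm : Measurable T) (hT : ShiftBounded m T) :
    Convex ℝ (shiftMoments m T g) := by
  rintro _ ⟨f, ⟨hf, hf1⟩, rfl⟩ _ ⟨h, ⟨hh, hh1⟩, rfl⟩ a b ha hb hab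
  have habs (x : X) : |(a * |f x| + b * |h x|)| = a * |f x| + b * |h x| :=
    abs_of_nonneg (by positivity)
  have hint (i : ι) {k : X → ℝ} (hk : Integrable k m) :
      Integrable (fun x => g i x * |k (T x)|) m :=
    (hT.integrable_comp hTm hk).abs.bdd_mul (Lp.aestronglyMeasurable (g i))
      (ae_norm_coeFn_le_norm (g i))
  refine ⟨fun x => a * |f x| + b * |h x|,
    ⟨(hf.abs.const_mul a).add (hh.abs.const_mul b), ?_⟩, funext fun i => ?_⟩
  · simp only [habs]
    rw [integral_add (hf.abs.const_mul a) (hh.abs.const_mul b), integral_const_mul,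
      integral_const_mul, hf1, hh1, mul_one, mul_one, hab]
  · simp only [habs, Pi.add_apply, Pi.smul_apply, smul_eq_mul]
    rw [← integral_const_mul, ← integral_const_mul,
      ← integral_add ((hint i hf).const_mul a) ((hint i hh).const_mul b)]
    congr 1 with x
    ring

end ShiftMoments

section WeakDual

/-- The weak-* continuous linear map sending a functional to its values at the vectors `v i`,
through which `τₙ(μ, D)` depends on `μ` when `v` is the partition of unity `D`. -/
def weakDualEval {ι V : Type*} [AddCommMonoid V] [Module ℝ V] [TopologicalSpace V] (v : ι → V) :
    WeakDual ℝ V →L[ℝ] ι → ℝ where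
  toFun μ i := μ (v i)
  map_add' _ _ := rfl
  map_smul' _ _ := rfl
  cont := continuous_pi fun i => WeakDual.eval_continuous (v i)

variable {X : Type*} [MeasurableSpace X]

theorem convex_setOf_isPositiveFunctional (m : Measure X) :
    Convex ℝ {μ : WeakDual ℝ (Lp ℝ ⊤ m) | IsPositiveFunctional m μ} :=
  fun _ hμ _ hν _ _ ha hb _ φ hφ =>
    add_nonneg (mul_nonneg ha (hμ φ hφ)) (mul_nonneg hb (hν φ hφ))

theorem convex_setOf_memMalpha (m : Measure X) (α : X → X) :
    Convex ℝ {μ : WeakDual ℝ (Lp ℝ ⊤ m) | MemMalpha m α μ} := by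
  intro μ hμ ν hν a b ha hb hab
  have happly (φ : Lp ℝ ⊤ m) : (a • μ + b • ν) φ = a * μ φ + b * ν φ := rfl
  refine ⟨convex_setOf_isPositiveFunctional m hμ.1 hν.1 ha hb hab, fun φ hφ => ?_,
    fun φ ψ hψ => ?_⟩
  · rw [happly, hμ.2.1 φ hφ, hν.2.1 φ hφ, mul_one, mul_one, hab]
  · rw [happly, happly, hμ.2.2 φ ψ hψ, hν.2.2 φ ψ hψ]

theorem isClosed_setOf_memMalpha (m : Measure X) (α : X → X) :
    IsClosed {μ : WeakDual ℝ (Lp ℝ ⊤ m) | MemMalpha m α μ} := by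
  have heval (φ : Lp ℝ ⊤ m) : Continuous fun μ : WeakDual ℝ (Lp ℝ ⊤ m) => μ φ :=
    WeakDual.eval_continuous φ
  simp only [MemMalpha, IsPositiveFunctional, IsNormalizedFunctional, IsInvariantFunctional,
    ofPred_and, ofPred_forall]
  refine .inter ?_ (.inter ?_ ?_)
  · exact isClosed_iInter fun φ => isClosed_iInter fun _ => isClosed_le continuous_const (heval φ)
  · exact isClosed_iInter fun φ => isClosed_iInter fun _ => isClosed_eq (heval φ) continuous_const
  · exact isClosed_iInter fun φ => isClosed_iInter fun ψ => isClosed_iInter fun _ =>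
      isClosed_eq (heval ψ) (heval φ)

end WeakDual

section TEntropy

variable {X : Type*} [MeasurableSpace X] {m : Measure X} {α : X → X}

theorem tauN_eq_entSup (μ : Lp ℝ ⊤ m → ℝ) (n : ℕ) (D : PartUnity m) :
    tauN m α μ n D = entSup (shiftMoments m α^[n] D.g) fun i => μ (D.g i) := by
  rw [entSup, shiftMoments, iSup_image, ← sSup_image, tauN]
  congr 1
  ext r
  simp only [mem_image, mem_ofPred_eq, and_assoc, eq_comm]

theorem weakDualEval_mem_Ici (D : PartUnity m) {μ : WeakDual ℝ (Lp ℝ ⊤ m)}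
    (hμ : IsPositiveFunctional m μ) : weakDualEval D.g μ ∈ Ici 0 :=
  fun i => hμ _ (D.nonneg i)

theorem eConcaveOn_tauN (hα : Measurable α) (hbdd : ShiftBounded m α) (n : ℕ) (D : PartUnity m) :
    EConcaveOn {μ : WeakDual ℝ (Lp ℝ ⊤ m) | IsPositiveFunctional m μ}
      fun μ => tauN m α μ n D := by
  simp only [tauN_eq_entSup]
  have hsup := eConcaveOn_entSup (convex_shiftMoments (hα.iterate n) (hbdd.iterate hα n))
    (shiftMoments_subset_Ici D.nonneg)
  exact (hsup.comp_linearMap (weakDualEval D.g).toLinearMap).subset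
    (fun _ => weakDualEval_mem_Ici D) (convex_setOf_isPositiveFunctional m)

theorem upperSemicontinuousOn_tauN (hα : Measurable α) (hbdd : ShiftBounded m α) (n : ℕ)
    (D : PartUnity m) :
    UpperSemicontinuousOn (fun μ : WeakDual ℝ (Lp ℝ ⊤ m) => tauN m α μ n D)
      {μ | IsPositiveFunctional m μ} := by
  simp only [tauN_eq_entSup]
  have hsup := upperSemicontinuousOn_entSup
    (isBounded_shiftMoments (hα.iterate n) (hbdd.iterate hα n))
    (shiftMoments_subset_Ici D.nonneg)
  exact hsup.comp (weakDualEval D.g).continuous.continuousOn fun _ => weakDualEval_mem_Ici D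

theorem eConcaveOn_tEntropy (hα : Measurable α) (hbdd : ShiftBounded m α) :
    EConcaveOn {μ : WeakDual ℝ (Lp ℝ ⊤ m) | IsPositiveFunctional m μ} fun μ => tEntropy m α μ :=
  have hconv := convex_setOf_isPositiveFunctional m
  .iInf hconv fun n => .iInf hconv fun _ => .iInf hconv fun D =>
    (eConcaveOn_tauN hα hbdd n D).coe_mul (by positivity)

theorem upperSemicontinuousOn_tEntropy (hα : Measurable α) (hbdd : ShiftBounded m α) :
    UpperSemicontinuousOn (fun μ : WeakDual ℝ (Lp ℝ ⊤ m) => tEntropy m α μ)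
      {μ | IsPositiveFunctional m μ} :=
  upperSemicontinuousOn_iInf fun n => upperSemicontinuousOn_iInf fun hn =>
    upperSemicontinuousOn_iInf fun D =>
      upperSemicontinuousOn_coe_mul (upperSemicontinuousOn_tauN hα hbdd n D) (by positivity)

theorem tEntropyExt_of_memMalpha {μ : Lp ℝ ⊤ m → ℝ} (hμ : MemMalpha m α μ) :
    tEntropyExt m α μ = tEntropy m α μ :=
  if_pos hμ

theorem tEntropyExt_of_not_memMalpha {μ : Lp ℝ ⊤ m → ℝ} (hμ : ¬MemMalpha m α μ) :
    tEntropyExt m α μ = ⊥ :=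
  if_neg hμ

end TEntropy

/-- **Remark 8**: the t-entropy, extended by `τ(μ) = −∞` for functionals not in
`M_α(X, m)`, is concave and upper semicontinuous in the weak-* topology on the dual
of `L^∞(X, m)`. -/
theorem tEntropyExt_upperSemicontinuous_concave
    {X : Type*} [MeasurableSpace X] (m : Measure X) (α : X → X)
    (hα : Measurable α) (hbdd : ShiftBounded m α) :
    UpperSemicontinuous (fun μ : WeakDual ℝ (Lp ℝ ⊤ m) => tEntropyExt m α ⇑μ) ∧
    ∀ (μ ν : WeakDual ℝ (Lp ℝ ⊤ m)) (a b : ℝ), 0 ≤ a → 0 ≤ b → a + b = 1 →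
      ((a : ℝ) : EReal) * tEntropyExt m α ⇑μ + ((b : ℝ) : EReal) * tEntropyExt m α ⇑ν ≤
        tEntropyExt m α ⇑(a • μ + b • ν) := by
  have husc : UpperSemicontinuous fun μ : WeakDual ℝ (Lp ℝ ⊤ m) => tEntropyExt m α μ :=
    upperSemicontinuous_of_eq_bot_compl (isClosed_setOf_memMalpha m α)
      (upperSemicontinuousOn_congr_eqOn
        ((upperSemicontinuousOn_tEntropy hα hbdd).mono fun _ hμ => hμ.1)
        fun _ hμ => (tEntropyExt_of_memMalpha hμ).symm)
      fun _ => tEntropyExt_of_not_memMalpha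
  have hconc : EConcaveOn univ fun μ : WeakDual ℝ (Lp ℝ ⊤ m) => tEntropyExt m α μ :=
    .univ_of_eq_bot
      (((eConcaveOn_tEntropy hα hbdd).subset (fun _ hμ => hμ.1)
        (convex_setOf_memMalpha m α)).congr fun _ hμ => (tEntropyExt_of_memMalpha hμ).symm)
      fun _ => tEntropyExt_of_not_memMalpha
  exact ⟨husc, fun μ ν a b ha hb hab => hconc.2 (mem_univ μ) (mem_univ ν) ha hb hab⟩

end
end
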